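/- arXiv:2202.08000 — 2 statements merged into one kernel-verified Lean document; each statement's English description precedes it below -/
import Mathlib

section
/- Every real number u with 0 ≤ u ≤ 2 can be written as u = x + y with x and y elements of the Cantor ternary set. -/
/-!
Halving `u` gives a point of `[0, 1]`, which has a ternary expansion `0.d₀d₁d₂…`. Each ternary
digit is the average of two digits from `{0, 2}`: `0 = (0 + 0) / 2`, `1 = (0 + 2) / 2` and
`2 = (2 + 2) / 2`. Choosing such a pair for every `dₙ` splits `u = 2 * 0.d₀d₁d₂…` without carries
into two numbers whose ternary digits avoid `1`.
-/

theorem ofDigits_add_ofDigits_congr {b : ℕ} {x y z w : ℕ → Fin b}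
    (h : ∀ n, (x n : ℕ) + y n = z n + w n) :
    Real.ofDigits x + Real.ofDigits y = Real.ofDigits z + Real.ofDigits w := by
  have term_eq (n : ℕ) : Real.ofDigitsTerm x n + Real.ofDigitsTerm y n =
      Real.ofDigitsTerm z n + Real.ofDigitsTerm w n := by
    have digit_eq : (x n : ℝ) + y n = z n + w n := mod_cast h n
    simp only [Real.ofDigitsTerm, ← add_mul, digit_eq]
  simp only [Real.ofDigits, ← Real.summable_ofDigitsTerm.tsum_add Real.summable_ofDigitsTerm,
    term_eq]

theorem exists_ne_one_add_eq_add_self (d : Fin 3) :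
    ∃ a b : Fin 3, a ≠ 1 ∧ b ≠ 1 ∧ (a : ℕ) + b = d + d := by
  decide +revert

/-- Every real `u ∈ [0, 2]` is a sum of two elements of the Cantor ternary set. -/
theorem exists_cantorSet_add_eq (u : ℝ) (hu0 : 0 ≤ u) (hu2 : u ≤ 2) :
    ∃ x y : ℝ, x ∈ cantorSet ∧ y ∈ cantorSet ∧ u = x + y := by
  have half_mem : u / 2 ∈ Set.Icc (0 : ℝ) 1 := ⟨by linarith, by linarith⟩
  obtain ⟨d, -, hd⟩ := Real.ofDigits_SurjOn (b := 3) (by norm_num) half_mem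
  choose a b ha hb hab using fun n ↦ exists_ne_one_add_eq_add_self (d n)
  refine ⟨Real.ofDigits a, Real.ofDigits b, ofDigits_zero_two_sequence_mem_cantorSet ha,
    ofDigits_zero_two_sequence_mem_cantorSet hb, ?_⟩
  calc
    u = u / 2 + u / 2 := (add_halves u).symm
    _ = Real.ofDigits d + Real.ofDigits d := by rw [hd]
    _ = Real.ofDigits a + Real.ofDigits b := (ofDigits_add_ofDigits_congr hab).symm
end

section
/- For every α with 0 < α < log(3/2)/log 2, there exists a function F : ℝ² → ℝ that is continuously differentiable on [0, M_α]² (where M_α = 1/(3^{1/(1+α)} − 2)), whose gradient is α-Hölder continuous on [0, M_α]², and such that every u ∈ [0, 2] is a critical value of F: there exists a point p ∈ [0, M_α]² with ∇F(p) = (0, 0) and F(p) = u. -/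
/-!
Let `r ^ (1 + α) = 1 / 3` and let `K ⊆ [0, 1]` be the symmetric Cantor set with contraction ratio
`r`; the bound on `α` says exactly that `r < 1 / 2`. The function `x ↦ dist(x, K) ^ α` is
`α`-Hölder and vanishes on `K`. It scales by `r ^ α` under `x ↦ r x`, so its normalized primitive
`f` scales by `r ^ (1 + α) = 1 / 3`. Hence `f` carries `K`, on which `f' = 0`, onto the ternary
Cantor set `C`. Since `C + C = [0, 2]`, every `u ∈ [0, 2]` is a critical value of
`(x, y) ↦ f x + f y`, and rescaling the variables replaces the unit square by any other square.
-/

open Metric Set MeasureTheory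
open scoped NNReal Pointwise

/-! ### Hölder continuity -/

theorem holderOnWith_rpow {α : ℝ≥0} (hα : α ≤ 1) :
    HolderOnWith 1 α (fun x : ℝ ↦ x ^ (α : ℝ)) (Ici 0) := by
  intro a ha b hb
  wlog hab : b ≤ a generalizing a b
  · simpa only [edist_comm] using this b hb a ha (le_of_not_ge hab)
  have hsub : a ^ (α : ℝ) ≤ (a - b) ^ (α : ℝ) + b ^ (α : ℝ) := by
    simpa using Real.rpow_add_le_add_rpow (sub_nonneg.2 hab) hb α.coe_nonneg hα
  rw [ENNReal.coe_one, one_mul, edist_dist, edist_dist,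
    ENNReal.ofReal_rpow_of_nonneg dist_nonneg α.coe_nonneg, Real.dist_eq, Real.dist_eq,
    abs_of_nonneg (sub_nonneg.2 hab),
    abs_of_nonneg (sub_nonneg.2 (Real.rpow_le_rpow hb hab α.coe_nonneg))]
  exact ENNReal.ofReal_le_ofReal (by linarith)

theorem holderWith_infDist_rpow {X : Type*} [PseudoMetricSpace X] {α : ℝ≥0} (hα : α ≤ 1)
    (s : Set X) : HolderWith 1 α fun x ↦ infDist x s ^ (α : ℝ) := by
  simpa [Function.comp_def] using (holderOnWith_rpow hα).comp_holderWith
    (holderWith_one.2 (lipschitz_infDist_pt s)) fun x ↦ infDist_nonneg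

theorem holderWith_fderiv_iff_deriv {𝕜 E : Type*} [NontriviallyNormedField 𝕜]
    [NormedAddCommGroup E] [NormedSpace 𝕜 E] {f : 𝕜 → E} {C α : ℝ≥0} :
    HolderWith C α (fderiv 𝕜 f) ↔ HolderWith C α (deriv f) := by
  have hfderiv (x : 𝕜) : fderiv 𝕜 f x = ContinuousLinearMap.toSpanSingletonLIE 𝕜 E (deriv f x) := by
    ext; simp
  simp only [HolderWith, hfderiv, LinearIsometryEquiv.edist_map]

section SumOfCompositions

variable {𝕜 D E E' G : Type*} [NontriviallyNormedField 𝕜] [NormedAddCommGroup D] [NormedSpace 𝕜 D]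
  [NormedAddCommGroup E] [NormedSpace 𝕜 E] [NormedAddCommGroup E'] [NormedSpace 𝕜 E']
  [NormedAddCommGroup G] [NormedSpace 𝕜 G] {f : E → G} {g : E' → G}

theorem holderWith_fderiv_comp_continuousLinearMap {C α : ℝ≥0} (hf : Differentiable 𝕜 f)
    (hC : HolderWith C α (fderiv 𝕜 f)) (L : D →L[𝕜] E) :
    HolderWith (‖(ContinuousLinearMap.compL 𝕜 D E G).flip L‖₊ * (C * ‖L‖₊ ^ (α : ℝ))) α
      (fderiv 𝕜 (f ∘ L)) := by
  have hfderiv : fderiv 𝕜 (f ∘ L) =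
      (ContinuousLinearMap.compL 𝕜 D E G).flip L ∘ fderiv 𝕜 f ∘ L := by
    ext1 x
    simp [fderiv_comp x (hf _) L.differentiableAt]
  rw [hfderiv]
  simpa using (holderWith_one.2 (ContinuousLinearMap.lipschitz _)).comp
    (hC.comp (holderWith_one.2 L.lipschitz))

theorem exists_holderWith_fderiv_comp_add_comp {α : ℝ≥0} (hf : Differentiable 𝕜 f)
    (hg : Differentiable 𝕜 g) (hfα : ∃ C, HolderWith C α (fderiv 𝕜 f))
    (hgα : ∃ C, HolderWith C α (fderiv 𝕜 g)) (L : D →L[𝕜] E) (L' : D →L[𝕜] E') :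
    ∃ C, HolderWith C α (fderiv 𝕜 (f ∘ L + g ∘ L')) := by
  have hfderiv : fderiv 𝕜 (f ∘ L + g ∘ L') = fderiv 𝕜 (f ∘ L) + fderiv 𝕜 (g ∘ L') :=
    funext fun x ↦ fderiv_add (by fun_prop) (by fun_prop)
  obtain ⟨C, hC⟩ := hfα
  obtain ⟨C', hC'⟩ := hgα
  exact ⟨_, hfderiv ▸ (holderWith_fderiv_comp_continuousLinearMap hf hC L).add
    (holderWith_fderiv_comp_continuousLinearMap hg hC' L')⟩

theorem fderiv_comp_add_comp_eq_zero {L : D →L[𝕜] E} {L' : D →L[𝕜] E'} {x : D}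
    (hf : DifferentiableAt 𝕜 f (L x)) (hg : DifferentiableAt 𝕜 g (L' x))
    (hf0 : fderiv 𝕜 f (L x) = 0) (hg0 : fderiv 𝕜 g (L' x) = 0) :
    fderiv 𝕜 (f ∘ L + g ∘ L') x = 0 := by
  rw [fderiv_add (by fun_prop) (by fun_prop), fderiv_comp _ hf L.differentiableAt,
    fderiv_comp _ hg L'.differentiableAt, hf0, hg0, ContinuousLinearMap.zero_comp,
    ContinuousLinearMap.zero_comp, add_zero]

end SumOfCompositions

/-! ### Symmetric Cantor sets -/

/-- The point with address `d` in the symmetric Cantor set of ratio `r`, that is, the fixed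
point of the composition `T (d 0) ∘ T (d 1) ∘ ⋯`, where `T false x = r * x` and
`T true x = (1 - r) + r * x`. -/
noncomputable def cantorPoint (r : ℝ) (d : ℕ → Bool) : ℝ :=
  (1 - r) * Cardinal.cantorFunction r d

/-- The Cantor set obtained from `[0, 1]` by keeping, at each step, the two end pieces of relative
length `r` of every interval; the classical ternary set is the case `r = 1 / 3`. -/
def symmetricCantorSet (r : ℝ) : Set ℝ := range (cantorPoint r)

section CantorSet

variable {r : ℝ}

theorem cantorPoint_eq_cond_add (hr0 : 0 ≤ r) (hr1 : r < 1) (d : ℕ → Bool) :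
    cantorPoint r d = cond (d 0) (1 - r) 0 + r * cantorPoint r fun n ↦ d (n + 1) := by
  rw [cantorPoint, Cardinal.cantorFunction_succ d hr0 hr1, cantorPoint]
  cases d 0 <;> simp only [cond_true, cond_false] <;> ring

theorem cantorPoint_not (hr0 : 0 ≤ r) (hr1 : r < 1) (d : ℕ → Bool) :
    cantorPoint r (fun n ↦ !d n) = 1 - cantorPoint r d := by
  have hsum : Cardinal.cantorFunction r (fun n ↦ !d n) + Cardinal.cantorFunction r d =
      (1 - r)⁻¹ := by
    rw [Cardinal.cantorFunction, Cardinal.cantorFunction,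
      ← (Cardinal.summable_cantor_function _ hr0 hr1).tsum_add
        (Cardinal.summable_cantor_function _ hr0 hr1), ← tsum_geometric_of_lt_one hr0 hr1]
    refine tsum_congr fun n ↦ ?_
    cases h : d n <;> simp [h]
  rw [eq_sub_iff_add_eq, cantorPoint, cantorPoint, ← mul_add, hsum,
    mul_inv_cancel₀ (sub_pos.2 hr1).ne']

theorem cantorPoint_nonneg (hr0 : 0 ≤ r) (hr1 : r ≤ 1) (d : ℕ → Bool) : 0 ≤ cantorPoint r d :=
  mul_nonneg (sub_nonneg.2 hr1) (tsum_nonneg fun _ ↦ Cardinal.cantorFunctionAux_nonneg hr0)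

theorem cantorPoint_le_one (hr0 : 0 ≤ r) (hr1 : r < 1) (d : ℕ → Bool) : cantorPoint r d ≤ 1 := by
  have := cantorPoint_nonneg hr0 hr1.le fun n ↦ !d n
  rwa [cantorPoint_not hr0 hr1, sub_nonneg] at this

theorem eq_zero_of_norm_le_mul_norm_comp {X E : Type*} [NormedAddGroup E] {h : X → E} {T : X → X}
    {ρ B : ℝ} (hρ0 : 0 ≤ ρ) (hρ1 : ρ < 1) (hB : ∀ x, ‖h x‖ ≤ B)
    (hT : ∀ x, ‖h x‖ ≤ ρ * ‖h (T x)‖) (x : X) : h x = 0 := by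
  have hpow (n : ℕ) : ∀ x, ‖h x‖ ≤ ρ ^ n * B := by
    induction n with
    | zero => simpa using hB
    | succ n ih =>
      intro x
      calc ‖h x‖ ≤ ρ * ‖h (T x)‖ := hT x
        _ ≤ ρ * (ρ ^ n * B) := mul_le_mul_of_nonneg_left (ih _) hρ0
        _ = ρ ^ (n + 1) * B := by ring
  have hlim := (tendsto_pow_atTop_nhds_zero_of_lt_one hρ0 hρ1).mul_const B
  rw [zero_mul] at hlim
  exact norm_le_zero_iff.1 (ge_of_tendsto' hlim fun n ↦ hpow n x)

theorem eq_cantorPoint_of_eq_cond_add (hr0 : 0 ≤ r) (hr1 : r < 1) {h : (ℕ → Bool) → ℝ}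
    (hmem : ∀ d, h d ∈ Icc 0 1)
    (hcons : ∀ d, h d = cond (d 0) (1 - r) 0 + r * h fun n ↦ d (n + 1)) (d : ℕ → Bool) :
    h d = cantorPoint r d := by
  refine sub_eq_zero.1 (eq_zero_of_norm_le_mul_norm_comp (B := 1) (T := fun d n ↦ d (n + 1))
    (h := fun d ↦ h d - cantorPoint r d) hr0 hr1 (fun d ↦ ?_) (fun d ↦ ?_) d)
  · exact abs_sub_le_of_nonneg_of_le (hmem d).1 (hmem d).2
      (cantorPoint_nonneg hr0 hr1.le d) (cantorPoint_le_one hr0 hr1 d)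
  · rw [hcons d, cantorPoint_eq_cond_add hr0 hr1 d, add_sub_add_left_eq_sub, ← mul_sub, norm_mul,
      Real.norm_of_nonneg hr0]

theorem symmetricCantorSet_nonempty (r : ℝ) : (symmetricCantorSet r).Nonempty :=
  range_nonempty _

theorem symmetricCantorSet_subset_Icc (hr0 : 0 ≤ r) (hr1 : r < 1) :
    symmetricCantorSet r ⊆ Icc 0 1 :=
  range_subset_iff.2 fun d ↦ ⟨cantorPoint_nonneg hr0 hr1.le d, cantorPoint_le_one hr0 hr1 d⟩

theorem one_sub_mem_symmetricCantorSet (hr0 : 0 ≤ r) (hr1 : r < 1) {x : ℝ}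
    (hx : x ∈ symmetricCantorSet r) : 1 - x ∈ symmetricCantorSet r := by
  obtain ⟨d, rfl⟩ := hx
  exact ⟨_, cantorPoint_not hr0 hr1 d⟩

theorem one_mem_symmetricCantorSet (hr0 : 0 ≤ r) (hr1 : r < 1) : 1 ∈ symmetricCantorSet r := by
  have hzero : (0 : ℝ) ∈ symmetricCantorSet r :=
    ⟨fun _ ↦ false, by simp [cantorPoint, Cardinal.cantorFunction]⟩
  simpa using one_sub_mem_symmetricCantorSet hr0 hr1 hzero

theorem mul_mem_symmetricCantorSet (hr0 : 0 ≤ r) (hr1 : r < 1) {x : ℝ}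
    (hx : x ∈ symmetricCantorSet r) : r * x ∈ symmetricCantorSet r := by
  obtain ⟨d, rfl⟩ := hx
  exact ⟨fun n ↦ n.casesOn false d, by simp [cantorPoint_eq_cond_add hr0 hr1 (Nat.rec _ _)]⟩

theorem exists_eq_mul_or_eq_one_sub_mul_of_mem_symmetricCantorSet (hr0 : 0 ≤ r) (hr1 : r < 1)
    {y : ℝ} (hy : y ∈ symmetricCantorSet r) :
    ∃ x ∈ symmetricCantorSet r, y = r * x ∨ y = 1 - r * x := by
  obtain ⟨d, rfl⟩ := hy
  have htail : cantorPoint r (fun n ↦ d (n + 1)) ∈ symmetricCantorSet r := mem_range_self _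
  rw [cantorPoint_eq_cond_add hr0 hr1 d]
  cases d 0
  · exact ⟨_, htail, .inl (by simp)⟩
  · exact ⟨_, one_sub_mem_symmetricCantorSet hr0 hr1 htail, .inr (by simp only [cond_true]; ring)⟩

-- A ternary digit is the sum of two binary digits, so the ternary expansion of `u / 2` splits.
theorem symmetricCantorSet_one_third_add_self :
    symmetricCantorSet (1 / 3) + symmetricCantorSet (1 / 3) = Icc 0 2 := by
  refine Subset.antisymm ?_ fun u hu ↦ ?_
  · have hsub := symmetricCantorSet_subset_Icc (r := 1 / 3) (by norm_num) (by norm_num)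
    exact (add_subset_add hsub hsub).trans
      ((Icc_add_Icc_subset 0 1 0 1).trans (Icc_subset_Icc (by norm_num) (by norm_num)))
  obtain ⟨a, -, ha⟩ := Real.ofDigits_SurjOn (b := 3) (by norm_num)
    (show u / 2 ∈ Icc (0 : ℝ) 1 from ⟨by linarith [hu.1], by linarith [hu.2]⟩)
  let d (n : ℕ) : Bool := decide (1 ≤ a n)
  let e (n : ℕ) : Bool := decide (2 ≤ a n)
  have hterm (n : ℕ) : Cardinal.cantorFunctionAux (1 / 3) d n +
      Cardinal.cantorFunctionAux (1 / 3) e n = 3 * Real.ofDigitsTerm a n := by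
    simp only [Cardinal.cantorFunctionAux, Real.ofDigitsTerm, d, e, pow_succ]
    generalize a n = c
    fin_cases c <;> simp [mul_left_comm, ← two_mul]
  have hsummable (d : ℕ → Bool) : Summable (Cardinal.cantorFunctionAux (1 / 3) d) :=
    Cardinal.summable_cantor_function d (by norm_num) (by norm_num)
  refine mem_add.2 ⟨_, mem_range_self d, _, mem_range_self e, ?_⟩
  rw [cantorPoint, cantorPoint, ← mul_add, Cardinal.cantorFunction, Cardinal.cantorFunction,
    ← (hsummable d).tsum_add (hsummable e), tsum_congr hterm, tsum_mul_left, ← Real.ofDigits, ha]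
  ring

/-! ### Distance to a symmetric Cantor set -/

theorem infDist_symmetricCantorSet_one_sub (hr0 : 0 ≤ r) (hr1 : r < 1) (x : ℝ) :
    infDist (1 - x) (symmetricCantorSet r) = infDist x (symmetricCantorSet r) := by
  have himage : (1 - ·) '' symmetricCantorSet r = symmetricCantorSet r := by
    refine Subset.antisymm
      (image_subset_iff.2 fun y ↦ one_sub_mem_symmetricCantorSet hr0 hr1) fun y hy ↦ ?_
    exact ⟨1 - y, one_sub_mem_symmetricCantorSet hr0 hr1 hy, sub_sub_cancel 1 y⟩
  conv_lhs => rw [← himage]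
  exact infDist_image (IsometryEquiv.subLeft (1 : ℝ)).isometry

theorem infDist_symmetricCantorSet_mul (hr0 : 0 < r) (hr : r ≤ 1 / 2) {x : ℝ} (hx : x ≤ 1) :
    infDist (r * x) (symmetricCantorSet r) = r * infDist x (symmetricCantorSet r) := by
  have hr1 : r < 1 := by linarith
  have hleft :
      infDist (r * x) (r • symmetricCantorSet r) = r * infDist x (symmetricCantorSet r) := by
    simpa [abs_of_pos hr0] using infDist_smul₀ hr0.ne' (symmetricCantorSet r) x
  refine le_antisymm ?_ ((le_infDist (symmetricCantorSet_nonempty r)).2 fun {y} hy ↦ ?_)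
  · rw [← hleft]
    exact infDist_le_infDist_of_subset
      (smul_set_subset_iff.2 fun y ↦ mul_mem_symmetricCantorSet hr0.le hr1)
      (symmetricCantorSet_nonempty r).smul_set
  obtain ⟨z, hz, rfl | rfl⟩ :=
    exists_eq_mul_or_eq_one_sub_mul_of_mem_symmetricCantorSet hr0.le hr1 hy
  · exact hleft ▸ infDist_le_dist_of_mem (smul_mem_smul_set hz)
  -- No point of the right half is closer to `r * x` than the image `r` of the point `1`.
  · have hz1 : r * z ≤ r := mul_le_of_le_one_right hr0.le
      (symmetricCantorSet_subset_Icc hr0.le hr1 hz).2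
    calc r * infDist x (symmetricCantorSet r)
        ≤ r * dist x 1 :=
          mul_le_mul_of_nonneg_left
            (infDist_le_dist_of_mem (one_mem_symmetricCantorSet hr0.le hr1)) hr0.le
      _ = r - r * x := by rw [dist_comm, Real.dist_eq, abs_of_nonneg (sub_nonneg.2 hx)]; ring
      _ ≤ (1 - r * z) - r * x := by linarith
      _ ≤ dist (r * x) (1 - r * z) := by rw [dist_comm]; exact le_abs_self _

theorem infDist_symmetricCantorSet_one_half_pos (hr0 : 0 ≤ r) (hr : r < 1 / 2) :
    0 < infDist (1 / 2) (symmetricCantorSet r) := by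
  have hr1 : r < 1 := by linarith
  refine (sub_pos.2 hr).trans_le
    ((le_infDist (symmetricCantorSet_nonempty r)).2 fun {y} hy ↦ ?_)
  obtain ⟨z, hz, hy⟩ := exists_eq_mul_or_eq_one_sub_mul_of_mem_symmetricCantorSet hr0 hr1 hy
  have hz1 : r * z ≤ r := mul_le_of_le_one_right hr0 (symmetricCantorSet_subset_Icc hr0 hr1 hz).2
  rw [Real.dist_eq, le_abs]
  rcases hy with rfl | rfl
  · left; linarith
  · right; linarith

end CantorSet

/-! ### The smooth Cantor function -/

/-- The density of `smoothCantorFunction`: a power of the distance to the symmetric Cantor set. -/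
noncomputable def cantorDensity (r α x : ℝ) : ℝ := infDist x (symmetricCantorSet r) ^ α

/-- The primitive of `cantorDensity r α` normalized to map `0` to `0` and `1` to `1`; for
`r = 1 / 2` the density vanishes on `[0, 1]` and the quotient is a junk value. Like the classical
Cantor function it respects the self-similarity of the Cantor set, but it is continuously
differentiable and increases only across the gaps. -/
noncomputable def smoothCantorFunction (r α x : ℝ) : ℝ :=
  (∫ t in 0..x, cantorDensity r α t) / ∫ t in 0..1, cantorDensity r α t

section SmoothCantorFunction

variable {r α x : ℝ}

theorem cantorDensity_nonneg (r α x : ℝ) : 0 ≤ cantorDensity r α x :=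
  Real.rpow_nonneg infDist_nonneg α

theorem continuous_cantorDensity (r : ℝ) (hα : 0 ≤ α) : Continuous (cantorDensity r α) :=
  (continuous_infDist_pt _).rpow_const fun _ ↦ .inr hα

theorem cantorDensity_one_sub (hr0 : 0 ≤ r) (hr1 : r < 1) (α x : ℝ) :
    cantorDensity r α (1 - x) = cantorDensity r α x := by
  rw [cantorDensity, infDist_symmetricCantorSet_one_sub hr0 hr1, cantorDensity]

theorem cantorDensity_mul (hr0 : 0 < r) (hr : r ≤ 1 / 2) (α : ℝ) (hx : x ≤ 1) :
    cantorDensity r α (r * x) = r ^ α * cantorDensity r α x := by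
  rw [cantorDensity, infDist_symmetricCantorSet_mul hr0 hr hx,
    Real.mul_rpow hr0.le infDist_nonneg, cantorDensity]

theorem integral_cantorDensity_pos (hr0 : 0 ≤ r) (hr : r < 1 / 2) (hα : 0 ≤ α) :
    0 < ∫ t in 0..1, cantorDensity r α t :=
  intervalIntegral.integral_pos one_pos (continuous_cantorDensity r hα).continuousOn
    (fun t _ ↦ cantorDensity_nonneg r α t)
    ⟨1 / 2, ⟨by norm_num, by norm_num⟩,
      Real.rpow_pos_of_pos (infDist_symmetricCantorSet_one_half_pos hr0 hr) α⟩

theorem smoothCantorFunction_mul (hr0 : 0 < r) (hr : r ≤ 1 / 2) (α : ℝ) (hx : x ≤ 1) :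
    smoothCantorFunction r α (r * x) = r ^ (1 + α) * smoothCantorFunction r α x := by
  have hscale : ∫ t in 0..r * x, cantorDensity r α t =
      r ^ (1 + α) * ∫ t in 0..x, cantorDensity r α t :=
    calc ∫ t in 0..r * x, cantorDensity r α t
        = r * ∫ t in 0..x, cantorDensity r α (r * t) := by
          rw [intervalIntegral.mul_integral_comp_mul_left, mul_zero]
      _ = r * ∫ t in 0..x, r ^ α * cantorDensity r α t := by
          congr 1
          refine intervalIntegral.integral_congr fun t ht ↦ cantorDensity_mul hr0 hr α ?_
          exact ht.2.trans (max_le zero_le_one hx)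
      _ = r ^ (1 + α) * ∫ t in 0..x, cantorDensity r α t := by
          rw [intervalIntegral.integral_const_mul, Real.rpow_add hr0, Real.rpow_one, mul_assoc]
  rw [smoothCantorFunction, hscale, mul_div_assoc, smoothCantorFunction]

theorem smoothCantorFunction_one_sub (hr0 : 0 ≤ r) (hr : r < 1 / 2) (hα : 0 ≤ α) (x : ℝ) :
    smoothCantorFunction r α (1 - x) = 1 - smoothCantorFunction r α x := by
  have hint (a b : ℝ) : IntervalIntegrable (cantorDensity r α) volume a b :=
    (continuous_cantorDensity r hα).intervalIntegrable a b
  have hreflect : ∫ t in 0..1 - x, cantorDensity r α t = ∫ t in x..1, cantorDensity r α t := by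
    have := intervalIntegral.integral_comp_sub_left (a := x) (b := 1) (cantorDensity r α) 1
    simpa [cantorDensity_one_sub hr0 (show r < 1 by linarith)] using this.symm
  rw [smoothCantorFunction, hreflect, ← intervalIntegral.integral_interval_sub_left (hint 0 1)
    (hint 0 x), sub_div, div_self (integral_cantorDensity_pos hr0 hr hα).ne', smoothCantorFunction]

theorem smoothCantorFunction_one_sub_add_mul (hr0 : 0 < r) (hr : r < 1 / 2) (hα : 0 ≤ α)
    (hx : 0 ≤ x) : smoothCantorFunction r α (1 - r + r * x) =
      1 - r ^ (1 + α) + r ^ (1 + α) * smoothCantorFunction r α x := by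
  rw [show 1 - r + r * x = 1 - r * (1 - x) by ring, smoothCantorFunction_one_sub hr0.le hr hα,
    smoothCantorFunction_mul hr0 hr.le α (sub_le_self 1 hx),
    smoothCantorFunction_one_sub hr0.le hr hα]
  ring

theorem smoothCantorFunction_nonneg (r α : ℝ) (hx : 0 ≤ x) : 0 ≤ smoothCantorFunction r α x :=
  div_nonneg
    (intervalIntegral.integral_nonneg hx fun t _ ↦ cantorDensity_nonneg r α t)
    (intervalIntegral.integral_nonneg zero_le_one fun t _ ↦ cantorDensity_nonneg r α t)

theorem smoothCantorFunction_mem_Icc (hr0 : 0 ≤ r) (hr : r < 1 / 2) (hα : 0 ≤ α)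
    (hx : x ∈ Icc 0 1) : smoothCantorFunction r α x ∈ Icc 0 1 := by
  refine ⟨smoothCantorFunction_nonneg r α hx.1, ?_⟩
  have := smoothCantorFunction_nonneg r α (sub_nonneg.2 hx.2)
  rwa [smoothCantorFunction_one_sub hr0 hr hα, sub_nonneg] at this

theorem smoothCantorFunction_cantorPoint (hr0 : 0 < r) (hr : r < 1 / 2) (hα : 0 ≤ α)
    (d : ℕ → Bool) :
    smoothCantorFunction r α (cantorPoint r d) = cantorPoint (r ^ (1 + α)) d := by
  have hr1 : r < 1 := by linarith
  have hmem (d : ℕ → Bool) : cantorPoint r d ∈ Icc 0 1 :=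
    symmetricCantorSet_subset_Icc hr0.le hr1 (mem_range_self d)
  refine eq_cantorPoint_of_eq_cond_add (Real.rpow_nonneg hr0.le _)
    (Real.rpow_lt_one hr0.le hr1 (by linarith)) (h := fun d ↦ smoothCantorFunction r α _)
    (fun d ↦ smoothCantorFunction_mem_Icc hr0.le hr hα (hmem d)) (fun d ↦ ?_) d
  rw [cantorPoint_eq_cond_add hr0.le hr1 d]
  cases d 0
  · rw [cond_false, cond_false, zero_add, zero_add, smoothCantorFunction_mul hr0 hr.le α (hmem _).2]
  · rw [cond_true, cond_true, smoothCantorFunction_one_sub_add_mul hr0 hr hα (hmem _).1]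

theorem image_smoothCantorFunction_symmetricCantorSet (hr0 : 0 < r) (hr : r < 1 / 2)
    (hα : 0 ≤ α) :
    smoothCantorFunction r α '' symmetricCantorSet r = symmetricCantorSet (r ^ (1 + α)) := by
  rw [symmetricCantorSet, ← range_comp, symmetricCantorSet]
  exact congrArg range (funext (smoothCantorFunction_cantorPoint hr0 hr hα))

theorem hasDerivAt_smoothCantorFunction (r : ℝ) (hα : 0 ≤ α) (x : ℝ) :
    HasDerivAt (smoothCantorFunction r α)
      (cantorDensity r α x / ∫ t in 0..1, cantorDensity r α t) x :=
  ((continuous_cantorDensity r hα).integral_hasStrictDerivAt 0 x).hasDerivAt.div_const _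

theorem deriv_smoothCantorFunction (r : ℝ) (hα : 0 ≤ α) :
    deriv (smoothCantorFunction r α) =
      (∫ t in 0..1, cantorDensity r α t)⁻¹ • cantorDensity r α := by
  ext x
  rw [(hasDerivAt_smoothCantorFunction r hα x).deriv, div_eq_inv_mul, Pi.smul_apply, smul_eq_mul]

theorem contDiff_smoothCantorFunction (r : ℝ) (hα : 0 ≤ α) :
    ContDiff ℝ 1 (smoothCantorFunction r α) := by
  refine contDiff_one_iff_deriv.2
    ⟨fun x ↦ (hasDerivAt_smoothCantorFunction r hα x).differentiableAt, ?_⟩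
  rw [deriv_smoothCantorFunction r hα]
  exact (continuous_cantorDensity r hα).const_smul _

theorem fderiv_smoothCantorFunction_eq_zero (hα : 0 < α) (hx : x ∈ symmetricCantorSet r) :
    fderiv ℝ (smoothCantorFunction r α) x = 0 := by
  ext
  simp [deriv_smoothCantorFunction r hα.le, cantorDensity, infDist_zero_of_mem hx,
    Real.zero_rpow hα.ne']

theorem exists_holderWith_fderiv_smoothCantorFunction (r : ℝ) {α : ℝ≥0} (hα : α ≤ 1) :
    ∃ C, HolderWith C α (fderiv ℝ (smoothCantorFunction r α)) := by
  simp only [holderWith_fderiv_iff_deriv, deriv_smoothCantorFunction r α.coe_nonneg]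
  exact ⟨_, (holderWith_infDist_rpow hα (symmetricCantorSet r)).smul _⟩

end SmoothCantorFunction

/-! ### The planar function -/

theorem two_rpow_one_add_lt_three {α : ℝ} (hα : α < Real.log (3 / 2) / Real.log 2) :
    (2 : ℝ) ^ (1 + α) < 3 := by
  have : (2 : ℝ) ^ α < 3 / 2 := (Real.lt_logb_iff_rpow_lt one_lt_two (by norm_num)).1 hα
  rw [Real.rpow_add two_pos, Real.rpow_one]
  linarith

theorem two_lt_three_rpow_one_div {α : ℝ} (hα1 : -1 < α)
    (hα : α < Real.log (3 / 2) / Real.log 2) : (2 : ℝ) < 3 ^ (1 / (1 + α)) := by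
  rw [one_div, Real.lt_rpow_inv_iff_of_pos zero_le_two zero_le_three (by linarith)]
  exact two_rpow_one_add_lt_three hα

theorem exists_C1_holder_stationary_on_ternary_values {α : ℝ≥0} (hα0 : 0 < α)
    (hα : α < Real.log (3 / 2) / Real.log 2) :
    ∃ f : ℝ → ℝ, ContDiff ℝ 1 f ∧ (∃ C, HolderWith C α (fderiv ℝ f)) ∧
      ∀ v ∈ symmetricCantorSet (1 / 3), ∃ x ∈ Icc 0 1, fderiv ℝ f x = 0 ∧ f x = v := by
  set r : ℝ := (3 ^ (1 / (1 + α : ℝ)))⁻¹ with hr_def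
  have hr0 : 0 < r := by positivity
  have hr : r < 1 / 2 := by
    rw [one_div]
    exact inv_strictAnti₀ two_pos
      (two_lt_three_rpow_one_div (by linarith [α.coe_nonneg]) hα)
  have hρ : r ^ (1 + α : ℝ) = 1 / 3 := by
    rw [hr_def, one_div, one_div, Real.inv_rpow (by positivity),
      Real.rpow_inv_rpow zero_le_three (by positivity)]
  have hα1 : α ≤ 1 := by
    have := (two_rpow_one_add_lt_three hα).trans (show (3 : ℝ) < 2 ^ (2 : ℝ) by norm_num)
    rw [Real.rpow_lt_rpow_left_iff one_lt_two] at this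
    exact NNReal.coe_le_coe.1 (by push_cast; linarith)
  refine ⟨smoothCantorFunction r α, contDiff_smoothCantorFunction r α.coe_nonneg,
    exists_holderWith_fderiv_smoothCantorFunction r hα1, fun v hv ↦ ?_⟩
  rw [← hρ, ← image_smoothCantorFunction_symmetricCantorSet hr0 hr α.coe_nonneg] at hv
  obtain ⟨x, hx, rfl⟩ := hv
  exact ⟨x, symmetricCantorSet_subset_Icc hr0.le (by linarith) hx,
    fderiv_smoothCantorFunction_eq_zero hα0 hx, rfl⟩

theorem exists_C1_alpha_holder_all_values_critical_general {α : ℝ≥0} (hα0 : 0 < α)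
    (hα : α < Real.log (3 / 2) / Real.log 2) {M : ℝ} (hM : 0 < M) :
    ∃ F : ℝ × ℝ → ℝ, ContDiff ℝ 1 F ∧ (∃ K, HolderWith K α (fderiv ℝ F)) ∧
      ∀ u ∈ Icc (0 : ℝ) 2, ∃ p ∈ Icc 0 M ×ˢ Icc 0 M, fderiv ℝ F p = 0 ∧ F p = u := by
  obtain ⟨f, hf, hfα, hcrit⟩ := exists_C1_holder_stationary_on_ternary_values hα0 hα
  have hfd : Differentiable ℝ f := hf.differentiable one_ne_zero
  let L₁ : ℝ × ℝ →L[ℝ] ℝ := M⁻¹ • ContinuousLinearMap.fst ℝ ℝ ℝ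
  let L₂ : ℝ × ℝ →L[ℝ] ℝ := M⁻¹ • ContinuousLinearMap.snd ℝ ℝ ℝ
  refine ⟨f ∘ L₁ + f ∘ L₂, (hf.comp L₁.contDiff).add (hf.comp L₂.contDiff),
    exists_holderWith_fderiv_comp_add_comp hfd hfd hfα hfα L₁ L₂, fun u hu ↦ ?_⟩
  rw [← symmetricCantorSet_one_third_add_self] at hu
  obtain ⟨v, hv, w, hw, rfl⟩ := hu
  obtain ⟨x, hx, hfx, rfl⟩ := hcrit v hv
  obtain ⟨y, hy, hfy, rfl⟩ := hcrit w hw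
  have hscale {z : ℝ} (hz : z ∈ Icc 0 1) : M * z ∈ Icc 0 M :=
    ⟨mul_nonneg hM.le hz.1, mul_le_of_le_one_right hM.le hz.2⟩
  have hL₁ : L₁ (M * x, M * y) = x := inv_mul_cancel_left₀ hM.ne' x
  have hL₂ : L₂ (M * x, M * y) = y := inv_mul_cancel_left₀ hM.ne' y
  exact ⟨(M * x, M * y), ⟨hscale hx, hscale hy⟩,
    fderiv_comp_add_comp_eq_zero (hfd _) (hfd _) (by rwa [hL₁]) (by rwa [hL₂]),
    by simp only [Pi.add_apply, Function.comp_apply, hL₁, hL₂]⟩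

/-- For every `0 < α < log(3/2)/log 2`, with `M_α = 1/(3^{1/(1+α)} - 2)`, there is a
function `F : ℝ² → ℝ`, continuously differentiable on `[0, M_α]²`, whose gradient is
`α`-Hölder continuous on `[0, M_α]²`, such that every `u ∈ [0, 2]` is a critical
value of `F`. -/
theorem exists_C1_alpha_holder_all_values_critical (α : ℝ) (hα0 : 0 < α)
    (hα : α < Real.log (3 / 2) / Real.log 2) :
    ∃ (M : ℝ), M = 1 / ((3 : ℝ) ^ (1 / (1 + α)) - 2) ∧
    ∃ F : ℝ × ℝ → ℝ,
      ContDiffOn ℝ 1 F (Set.Icc 0 M ×ˢ Set.Icc 0 M) ∧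
      (∃ K : ℝ, ∀ p ∈ Set.Icc 0 M ×ˢ Set.Icc 0 M, ∀ q ∈ Set.Icc 0 M ×ˢ Set.Icc 0 M,
        ‖fderiv ℝ F p - fderiv ℝ F q‖ ≤ K * ‖p - q‖ ^ α) ∧
      (∀ u ∈ Set.Icc (0 : ℝ) 2, ∃ p ∈ Set.Icc 0 M ×ˢ Set.Icc 0 M,
        fderiv ℝ F p = 0 ∧ F p = u) := by
  lift α to ℝ≥0 using hα0.le
  have hM : 0 < (3 : ℝ) ^ (1 / (1 + α : ℝ)) - 2 :=
    sub_pos.2 (two_lt_three_rpow_one_div (by linarith) hα)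
  obtain ⟨F, hF, ⟨K, hK⟩, hcrit⟩ := exists_C1_alpha_holder_all_values_critical_general
    (NNReal.coe_pos.1 hα0) hα (one_div_pos.2 hM)
  exact ⟨_, rfl, F, hF.contDiffOn,
    ⟨K, fun p _ q _ ↦ by simpa only [dist_eq_norm] using hK.dist_le p q⟩, hcrit⟩
end
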